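/- arXiv:2107.00504 — 2 statements merged into one kernel-verified Lean document; each statement's English description precedes it below -/
import Mathlib

section
/- Let δt > 0 and let (u^n), (ũ^n), (λ^n), (f^n) be sequences of functions from S to ℝ satisfying the first-order scheme at the first step (ũ^1(z) − u^0(z) + δt·f^0(z) = 0; u^1(z) − ũ^1(z) = δt·λ^1(z); λ^1(z) ≥ 0, u^1(z) ≥ 0, λ^1(z)·u^1(z) = 0 for all z ∈ S) and the second-order scheme for n ≥ 1 ((3ũ^{n+1}(z) − 4u^n(z) + u^{n−1}(z))/(2δt) + f^n(z) = λ^n(z); 3(u^{n+1}(z) − ũ^{n+1}(z))/(2δt) = λ^{n+1}(z) − λ^n(z); λ^{n+1}(z) ≥ 0, u^{n+1}(z) ≥ 0, λ^{n+1}(z)·u^{n+1}(z) = 0 for all z ∈ S). If [f^n, ũ^{n+1}] ≥ 0 for all n ≥ 0, then the scheme is unconditionally stable: for every m ≥ 1, 4‖u^m‖² + (4/3)δt²‖λ^m‖² ≤ ‖2u^1 − u^0‖² + 4‖u^0‖². -/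
open Finset

/-!
Write `‖·‖` for the seminorm of the discrete inner product. The quantity
`Eₙ = ‖uⁿ⁺¹‖² + ‖2uⁿ⁺¹ - uⁿ‖² + (4/3)τ²‖λⁿ⁺¹‖²` is nonincreasing: testing the scheme with
`4τ ũⁿ⁺²` gives an exact energy balance in which every defect is nonnegative, by complementarity
and positivity of `f`. The first-order start gives `2E₀ ≤ R := ‖2u¹ - u⁰‖² + 4‖u⁰‖²`. Since
`‖2x - y‖² + ‖y‖² ≥ 2‖x‖²`, it follows that
`3‖uⁿ⁺¹‖² + (4/3)τ²‖λⁿ⁺¹‖² ≤ E₀ + ‖uⁿ‖²`, so the bound `4‖uⁿ‖² ≤ R`, which is trivial for `n = 0`,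
propagates to all `n` and yields the claim.
-/

open LinearMap (BilinForm)

section BilinForm

variable {𝕜 E : Type*} [CommRing 𝕜] [AddCommGroup E] [Module 𝕜 E] {B : BilinForm 𝕜 E}

theorem bdf2_telescoping (hB : B.IsSymm) (x y z : E) :
    2 * B ((3 : 𝕜) • x - (4 : 𝕜) • y + z) x =
      (B x x + B ((2 : 𝕜) • x - y) ((2 : 𝕜) • x - y)) -
        (B y y + B ((2 : 𝕜) • y - z) ((2 : 𝕜) • y - z)) +
        B (x - (2 : 𝕜) • y + z) (x - (2 : 𝕜) • y + z) := by
  simp only [map_add, map_sub, map_smul, LinearMap.add_apply, LinearMap.sub_apply,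
    LinearMap.smul_apply, smul_eq_mul, hB.eq y x, hB.eq z x, hB.eq z y]
  ring

theorem two_mul_apply_self_le_apply_two_smul_sub_add [LinearOrder 𝕜] [IsStrictOrderedRing 𝕜]
    (hB : B.IsPosSemidef) (x y : E) :
    2 * B x x ≤ B ((2 : 𝕜) • x - y) ((2 : 𝕜) • x - y) + B y y := by
  have parallelogram : B ((2 : 𝕜) • x - y) ((2 : 𝕜) • x - y) + B y y =
      2 * B x x + 2 * B (x - y) (x - y) := by
    simp only [map_sub, map_smul, LinearMap.sub_apply, LinearMap.smul_apply, smul_eq_mul,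
      hB.isSymm.eq y x]
    ring
  linarith [hB.isNonneg.nonneg (x - y)]

end BilinForm

section Scheme

variable {𝕜 E : Type*} [Field 𝕜] [LinearOrder 𝕜] [AddCommGroup E] [Module 𝕜 E]

/-- The positivity-preserving BDF2 scheme with time step `τ`, first-order start, predictors `ut` and
multipliers `lam`, in a vector space with bilinear form `B`. The equations are cleared of the
denominator `2τ`, and the second-order steps are indexed from `n = 0`. Of the pointwise conditions
`λ ≥ 0`, `u ≥ 0`, `λu = 0` only their consequences for the values of `B` are recorded. -/
structure IsPositivityPreservingBDF2 (B : BilinForm 𝕜 E) (τ : 𝕜) (u ut lam f : ℕ → E) : Prop where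
  first_predictor : ut 1 - u 0 + τ • f 0 = 0
  first_corrector : u 1 - ut 1 = τ • lam 1
  predictor (n : ℕ) : (3 : 𝕜) • ut (n + 2) - (4 : 𝕜) • u (n + 1) + u n =
    (2 * τ) • (lam (n + 1) - f (n + 1))
  corrector (n : ℕ) : (3 : 𝕜) • (u (n + 2) - ut (n + 2)) = (2 * τ) • (lam (n + 2) - lam (n + 1))
  nonneg (m n : ℕ) : 0 ≤ B (lam (m + 1)) (u (n + 1))
  complementary (n : ℕ) : B (lam (n + 1)) (u (n + 1)) = 0

/-- The energy `Eₙ = ‖uⁿ⁺¹‖² + ‖2uⁿ⁺¹ - uⁿ‖² + (4/3)τ²‖λⁿ⁺¹‖²` of the BDF2 scheme, with `‖x‖²`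
standing for `B x x`. It is indexed by the older of its two time levels, so that `E₀` is the energy
after the first-order start. -/
def bdf2Energy (B : BilinForm 𝕜 E) (τ : 𝕜) (u lam : ℕ → E) (n : ℕ) : 𝕜 :=
  B (u (n + 1)) (u (n + 1)) + B ((2 : 𝕜) • u (n + 1) - u n) ((2 : 𝕜) • u (n + 1) - u n) +
    4 / 3 * τ ^ 2 * B (lam (n + 1)) (lam (n + 1))

variable {B : BilinForm 𝕜 E} {τ : 𝕜} {u ut lam f : ℕ → E}

theorem IsPositivityPreservingBDF2.two_mul_smul_forcing_eq
    (h : IsPositivityPreservingBDF2 B τ u ut lam f) (n : ℕ) :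
    (2 * τ) • f (n + 1) =
      (2 * τ) • lam (n + 2) - ((3 : 𝕜) • u (n + 2) - (4 : 𝕜) • u (n + 1) + u n) := by
  linear_combination (norm := module) h.predictor n + h.corrector n

variable [IsStrictOrderedRing 𝕜]

theorem three_mul_apply_self_add_le_bdf2Energy_add (hB : B.IsPosSemidef) (n : ℕ) :
    3 * B (u (n + 1)) (u (n + 1)) + 4 / 3 * τ ^ 2 * B (lam (n + 1)) (lam (n + 1)) ≤
      bdf2Energy B τ u lam n + B (u n) (u n) := by
  unfold bdf2Energy
  linarith [two_mul_apply_self_le_apply_two_smul_sub_add hB (u (n + 1)) (u n)]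

namespace IsPositivityPreservingBDF2

theorem predictor_eq (h : IsPositivityPreservingBDF2 B τ u ut lam f) (n : ℕ) :
    ut (n + 2) = u (n + 2) - (2 / 3 * τ) • (lam (n + 2) - lam (n + 1)) := by
  linear_combination (norm := module) (-1 / 3 : 𝕜) • h.corrector n

theorem bdf2Energy_balance (hB : B.IsSymm) (h : IsPositivityPreservingBDF2 B τ u ut lam f) (n : ℕ) :
    bdf2Energy B τ u lam (n + 1) + 4 * τ * B (f (n + 1)) (ut (n + 2)) +
        B (ut (n + 2) - (2 : 𝕜) • u (n + 1) + u n) (ut (n + 2) - (2 : 𝕜) • u (n + 1) + u n) +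
        8 / 9 * τ ^ 2 * B (lam (n + 2) - lam (n + 1)) (lam (n + 2) - lam (n + 1)) +
        8 / 3 * τ * (B (lam (n + 1)) (u (n + 2)) + B (lam (n + 2)) (u (n + 1))) =
      bdf2Energy B τ u lam n := by
  have forcing : 4 * τ * B (f (n + 1)) (ut (n + 2)) =
      2 * B ((2 * τ) • lam (n + 2) - ((3 : 𝕜) • u (n + 2) - (4 : 𝕜) • u (n + 1) + u n))
        (ut (n + 2)) := by
    rw [← h.two_mul_smul_forcing_eq n, map_smul, LinearMap.smul_apply, smul_eq_mul]
    ring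
  have telescoping := bdf2_telescoping hB (u (n + 2)) (u (n + 1)) (u n)
  have orthogonal_new := h.complementary (n + 1)
  have orthogonal_old := h.complementary n
  rw [forcing, h.predictor_eq n]
  unfold bdf2Energy
  simp only [map_add, map_sub, map_smul, LinearMap.add_apply, LinearMap.sub_apply,
    LinearMap.smul_apply, smul_eq_mul, hB.eq (u _) (lam _), hB.eq (u n) (u (n + 1)),
    hB.eq (u n) (u (n + 2)), hB.eq (u (n + 1)) (u (n + 2)),
    hB.eq (lam (n + 1)) (lam (n + 2))] at telescoping ⊢
  linear_combination -telescoping + 20 / 3 * τ * orthogonal_new + 8 / 3 * τ * orthogonal_old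

/-- The weight `1 / 3` term completes the square in `u 0` once `λ¹ ⊥ u¹` has been used. -/
theorem bdf2Energy_zero_balance (hB : B.IsSymm) (h : IsPositivityPreservingBDF2 B τ u ut lam f) :
    2 * bdf2Energy B τ u lam 0 + 8 * τ * B (f 0) (ut 1) +
        1 / 3 * B ((3 : 𝕜) • u 0 - (2 : 𝕜) • u 1 + (4 * τ) • lam 1)
          ((3 : 𝕜) • u 0 - (2 : 𝕜) • u 1 + (4 * τ) • lam 1) +
        2 / 3 * B (u 1) (u 1) =
      B ((2 : 𝕜) • u 1 - u 0) ((2 : 𝕜) • u 1 - u 0) + 4 * B (u 0) (u 0) := by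
  have predictor : ut 1 = u 1 - τ • lam 1 := by rw [← h.first_corrector, sub_sub_cancel]
  have forcing : τ * B (f 0) (ut 1) = B (u 0 - ut 1) (ut 1) := by
    rw [← smul_eq_mul, ← LinearMap.smul_apply, ← map_smul]
    congr 2
    linear_combination (norm := module) h.first_predictor
  have orthogonal := h.complementary 0
  rw [mul_assoc, forcing, predictor]
  unfold bdf2Energy
  simp only [zero_add, map_add, map_sub, map_smul, LinearMap.add_apply, LinearMap.sub_apply,
    LinearMap.smul_apply, smul_eq_mul, hB.eq (u _) (lam _), hB.eq (u 0) (u 1)] at orthogonal ⊢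
  linear_combination 32 / 3 * τ * orthogonal

theorem bdf2Energy_antitone (hB : B.IsPosSemidef) (hτ : 0 ≤ τ)
    (h : IsPositivityPreservingBDF2 B τ u ut lam f) (hf : ∀ n, 0 ≤ B (f n) (ut (n + 1))) :
    Antitone (bdf2Energy B τ u lam) := by
  refine antitone_nat_of_succ_le fun n ↦ ?_
  have forcing : 0 ≤ 4 * τ * B (f (n + 1)) (ut (n + 2)) := mul_nonneg (by positivity) (hf (n + 1))
  have curvature := hB.isNonneg.nonneg (ut (n + 2) - (2 : 𝕜) • u (n + 1) + u n)
  have increment : 0 ≤ 8 / 9 * τ ^ 2 * B (lam (n + 2) - lam (n + 1)) (lam (n + 2) - lam (n + 1)) :=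
    mul_nonneg (by positivity) (hB.isNonneg.nonneg _)
  have cross : 0 ≤ 8 / 3 * τ * (B (lam (n + 1)) (u (n + 2)) + B (lam (n + 2)) (u (n + 1))) :=
    mul_nonneg (by positivity) (add_nonneg (h.nonneg n (n + 1)) (h.nonneg (n + 1) n))
  linarith [h.bdf2Energy_balance hB.isSymm n]

theorem two_mul_bdf2Energy_zero_le (hB : B.IsPosSemidef) (hτ : 0 ≤ τ)
    (h : IsPositivityPreservingBDF2 B τ u ut lam f) (hf : 0 ≤ B (f 0) (ut 1)) :
    2 * bdf2Energy B τ u lam 0 ≤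
      B ((2 : 𝕜) • u 1 - u 0) ((2 : 𝕜) • u 1 - u 0) + 4 * B (u 0) (u 0) := by
  have forcing : 0 ≤ 8 * τ * B (f 0) (ut 1) := by positivity
  linarith [h.bdf2Energy_zero_balance hB.isSymm, hB.isNonneg.nonneg (u 1),
    hB.isNonneg.nonneg ((3 : 𝕜) • u 0 - (2 : 𝕜) • u 1 + (4 * τ) • lam 1)]

end IsPositivityPreservingBDF2

theorem second_order_unconditional_stability_general (hB : B.IsPosSemidef) (hτ : 0 ≤ τ)
    (h : IsPositivityPreservingBDF2 B τ u ut lam f) (hf : ∀ n, 0 ≤ B (f n) (ut (n + 1))) (n : ℕ) :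
    4 * B (u (n + 1)) (u (n + 1)) + 4 / 3 * τ ^ 2 * B (lam (n + 1)) (lam (n + 1)) ≤
      B ((2 : 𝕜) • u 1 - u 0) ((2 : 𝕜) • u 1 - u 0) + 4 * B (u 0) (u 0) := by
  set R := B ((2 : 𝕜) • u 1 - u 0) ((2 : 𝕜) • u 1 - u 0) + 4 * B (u 0) (u 0)
  have multiplier_nonneg (k : ℕ) : 0 ≤ 4 / 3 * τ ^ 2 * B (lam (k + 1)) (lam (k + 1)) :=
    mul_nonneg (by positivity) (hB.isNonneg.nonneg _)
  have recursion (k : ℕ) : 3 * B (u (k + 1)) (u (k + 1)) +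
      4 / 3 * τ ^ 2 * B (lam (k + 1)) (lam (k + 1)) ≤ R / 2 + B (u k) (u k) := by
    linarith [three_mul_apply_self_add_le_bdf2Energy_add (τ := τ) (u := u) (lam := lam) hB k,
      h.bdf2Energy_antitone hB hτ hf k.zero_le, h.two_mul_bdf2Energy_zero_le hB hτ (hf 0)]
  have bound (k : ℕ) : 4 * B (u k) (u k) ≤ R := by
    induction k with
    | zero => linarith [hB.isNonneg.nonneg ((2 : 𝕜) • u 1 - u 0)]
    | succ k ih => linarith [recursion k, multiplier_nonneg k]
  linarith [recursion n, bound n, bound (n + 1)]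

end Scheme

section WeightedForm

variable {𝕜 S : Type*} [Fintype S]

/-- The discrete inner product `[u, v] = ∑ z, w z * u z * v z` on functions on the collocation
points, as a bilinear form. -/
def weightedForm [CommSemiring 𝕜] (w : S → 𝕜) : BilinForm 𝕜 (S → 𝕜) :=
  LinearMap.mk₂ 𝕜 (fun u v ↦ ∑ z, w z * u z * v z)
    (fun _ _ _ ↦ by simp [mul_add, add_mul, sum_add_distrib])
    (fun _ _ _ ↦ by simp [mul_sum, mul_assoc, mul_left_comm])
    (fun _ _ _ ↦ by simp [mul_add, sum_add_distrib])
    (fun _ _ _ ↦ by simp [mul_sum, mul_left_comm])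

theorem weightedForm_isPosSemidef [CommRing 𝕜] [LinearOrder 𝕜] [IsStrictOrderedRing 𝕜] {w : S → 𝕜}
    (hw : ∀ z, 0 ≤ w z) : (weightedForm w).IsPosSemidef where
  eq u v := sum_congr rfl fun z _ ↦ mul_right_comm (w z) (u z) (v z)
  nonneg u := sum_nonneg fun z _ ↦ by
    simpa only [mul_assoc] using mul_nonneg (hw z) (mul_self_nonneg (u z))

theorem IsPositivityPreservingBDF2.of_pointwise [Field 𝕜] [LinearOrder 𝕜] [IsStrictOrderedRing 𝕜]
    {w : S → 𝕜} (hw : ∀ z, 0 ≤ w z) {τ : 𝕜} (hτ : τ ≠ 0) {u ut lam f : ℕ → S → 𝕜}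
    (first_predictor : ∀ z, ut 1 z - u 0 z + τ * f 0 z = 0)
    (first_corrector : ∀ z, u 1 z - ut 1 z = τ * lam 1 z)
    (predictor : ∀ n z,
      (3 * ut (n + 2) z - 4 * u (n + 1) z + u n z) / (2 * τ) + f (n + 1) z = lam (n + 1) z)
    (corrector : ∀ n z,
      3 * (u (n + 2) z - ut (n + 2) z) / (2 * τ) = lam (n + 2) z - lam (n + 1) z)
    (complementarity : ∀ n z,
      0 ≤ lam (n + 1) z ∧ 0 ≤ u (n + 1) z ∧ lam (n + 1) z * u (n + 1) z = 0) :
    IsPositivityPreservingBDF2 (weightedForm w) τ u ut lam f where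
  first_predictor := funext first_predictor
  first_corrector := funext first_corrector
  predictor n := funext fun z ↦
    ((div_eq_iff (by positivity)).mp (eq_sub_of_add_eq (predictor n z))).trans (mul_comm _ _)
  corrector n := funext fun z ↦
    ((div_eq_iff (by positivity)).mp (corrector n z)).trans (mul_comm _ _)
  nonneg m n := sum_nonneg fun z _ ↦
    mul_nonneg (mul_nonneg (hw z) (complementarity m z).1) (complementarity n z).2.1
  complementary n := sum_eq_zero fun z _ ↦ by
    rw [mul_assoc, (complementarity n z).2.2, mul_zero]

end WeightedForm

/-- Unconditional-stability clause of Theorem 3.3 for the second-order BDF2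
positivity-preserving scheme: if `[f^n, ũ^{n+1}] ≥ 0` for all `n` (positivity of
the discrete operator) then `4‖u^m‖² + (4/3)δt²‖λ^m‖² ≤ ‖2u^1 − u^0‖² + 4‖u^0‖²`
for every `m ≥ 1`, with no restriction on the time step. -/
theorem second_order_unconditional_stability
    {S : Type*} [Fintype S] [Nonempty S] (w : S → ℝ) (hw : ∀ z, 0 < w z)
    (δt : ℝ) (hδt : 0 < δt)
    (u ut lam f : ℕ → S → ℝ)
    (hfirst1 : ∀ z, ut 1 z - u 0 z + δt * f 0 z = 0)
    (hfirst2 : ∀ z, u 1 z - ut 1 z = δt * lam 1 z)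
    (hfirstKKT : ∀ z, 0 ≤ lam 1 z ∧ 0 ≤ u 1 z ∧ lam 1 z * u 1 z = 0)
    (hstep1 : ∀ n, 1 ≤ n → ∀ z,
      (3 * ut (n + 1) z - 4 * u n z + u (n - 1) z) / (2 * δt) + f n z = lam n z)
    (hstep2 : ∀ n, 1 ≤ n → ∀ z,
      3 * (u (n + 1) z - ut (n + 1) z) / (2 * δt) = lam (n + 1) z - lam n z)
    (hKKT : ∀ n, 1 ≤ n → ∀ z, 0 ≤ lam (n + 1) z ∧ 0 ≤ u (n + 1) z ∧
      lam (n + 1) z * u (n + 1) z = 0)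
    (hpos : ∀ n, 0 ≤ ∑ z, w z * f n z * ut (n + 1) z)
    (m : ℕ) (hm : 1 ≤ m) :
    4 * (∑ z, w z * u m z * u m z)
      + (4 / 3) * δt ^ 2 * (∑ z, w z * lam m z * lam m z)
    ≤ (∑ z, w z * (2 * u 1 z - u 0 z) * (2 * u 1 z - u 0 z))
      + 4 * (∑ z, w z * u 0 z * u 0 z) := by
  obtain ⟨n, rfl⟩ := Nat.exists_eq_add_of_le' hm
  exact second_order_unconditional_stability_general
    (weightedForm_isPosSemidef fun z ↦ (hw z).le) hδt.le
    (.of_pointwise (fun z ↦ (hw z).le) hδt.ne' hfirst1 hfirst2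
      (fun n ↦ hstep1 (n + 1) n.succ_pos) (fun n ↦ hstep2 (n + 1) n.succ_pos)
      (Nat.rec hfirstKKT fun n _ ↦ hKKT (n + 1) n.succ_pos))
    hpos n
end

section
/- Let δt > 0 and let u, u', ũ, λ, λ' : S → ℝ satisfy, for every z ∈ S: u'(z) − ũ(z) = (2δt/3)(λ'(z) − λ(z)); u(z) ≥ 0, u'(z) ≥ 0, λ(z) ≥ 0, λ'(z) ≥ 0; u(z)·λ(z) = 0 and u'(z)·λ'(z) = 0. Then 4[u' − u, ũ − u'] = (8δt/3)([u', λ] + [u, λ']) ≥ 0. -/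
open Finset

section DiscreteInner

variable {S R : Type*} [Fintype S]

/-- The discrete inner product `[u, v]` of functions on the collocation points `S`. The weights
`w` are an explicit argument and their sign is left to the lemmas that need it. -/
def discreteInner [NonUnitalNonAssocSemiring R] (w u v : S → R) : R :=
  ∑ z, w z * u z * v z

theorem discreteInner_nonneg [Semiring R] [PartialOrder R] [IsOrderedRing R] {w u v : S → R}
    (hw : 0 ≤ w) (hu : 0 ≤ u) (hv : 0 ≤ v) : 0 ≤ discreteInner w u v :=
  sum_nonneg fun z _ => mul_nonneg (mul_nonneg (hw z) (hu z)) (hv z)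

theorem discreteInner_smul_right [CommSemiring R] (w u v : S → R) (c : R) :
    discreteInner w u (c • v) = c * discreteInner w u v :=
  dotProduct_smul c (w * u) v

theorem discreteInner_sub_sub_of_mul_eq_zero [NonUnitalRing R] (w : S → R) {u u' lam lam' : S → R}
    (hcomp : u * lam = 0) (hcomp' : u' * lam' = 0) :
    discreteInner w (u' - u) (lam - lam') =
      discreteInner w u' lam + discreteInner w u lam' := by
  have hpoint : (u' - u) * (lam - lam') = u' * lam + u * lam' := by
    rw [sub_mul, mul_sub, mul_sub, hcomp, hcomp', sub_zero, zero_sub, sub_neg_eq_add]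
  simp only [discreteInner, mul_assoc, ← sum_add_distrib, ← mul_add]
  exact sum_congr rfl fun z _ => congrArg (w z * ·) (congrFun hpoint z)

theorem bdf2_cross_term_nonneg_general [CommRing R] [PartialOrder R] [IsOrderedRing R]
    {w u u' ut lam lam' : S → R} {τ : R} (hw : 0 ≤ w) (hτ : 0 ≤ τ)
    (hstep : u' - ut = τ • (lam' - lam)) (hu : 0 ≤ u) (hu' : 0 ≤ u')
    (hlam : 0 ≤ lam) (hlam' : 0 ≤ lam') (hcomp : u * lam = 0) (hcomp' : u' * lam' = 0) :
    discreteInner w (u' - u) (ut - u') =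
        τ * (discreteInner w u' lam + discreteInner w u lam') ∧
      0 ≤ discreteInner w (u' - u) (ut - u') := by
  have hcorrection : ut - u' = τ • (lam - lam') := by
    rw [← neg_sub u' ut, hstep, ← smul_neg, neg_sub]
  have hcross : discreteInner w (u' - u) (ut - u') =
      τ * (discreteInner w u' lam + discreteInner w u lam') := by
    rw [hcorrection, discreteInner_smul_right, discreteInner_sub_sub_of_mul_eq_zero w hcomp hcomp']
  refine ⟨hcross, hcross ▸ mul_nonneg hτ (add_nonneg ?_ ?_)⟩
  · exact discreteInner_nonneg hw hu' hlam
  · exact discreteInner_nonneg hw hu hlam'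

end DiscreteInner

/-- Cross-term positivity estimate (equation (3.16)) used in the proof of
Theorem 3.3: with `u, lam` the corrected solution and multiplier at level `n`,
`u', lam'` those at level `n+1`, and `ut = ũ` the BDF2 predictor satisfying
`u' − ũ = (2δt/3)(λ' − λ)`, the KKT conditions at the two consecutive levels
yield `4[u' − u, ũ − u'] = (8δt/3)([u', λ] + [u, λ']) ≥ 0`. -/
theorem bdf2_cross_term_nonneg
    {S : Type*} [Fintype S] [Nonempty S] (w : S → ℝ) (hw : ∀ z, 0 < w z)
    (δt : ℝ) (hδt : 0 < δt)
    (u u' ut lam lam' : S → ℝ)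
    (hstep : ∀ z, u' z - ut z = (2 * δt / 3) * (lam' z - lam z))
    (hu : ∀ z, 0 ≤ u z) (hu' : ∀ z, 0 ≤ u' z)
    (hlam : ∀ z, 0 ≤ lam z) (hlam' : ∀ z, 0 ≤ lam' z)
    (hcomp : ∀ z, u z * lam z = 0) (hcomp' : ∀ z, u' z * lam' z = 0) :
    4 * (∑ z, w z * (u' z - u z) * (ut z - u' z))
      = (8 * δt / 3) * ((∑ z, w z * u' z * lam z) + (∑ z, w z * u z * lam' z)) ∧
    0 ≤ 4 * (∑ z, w z * (u' z - u z) * (ut z - u' z)) := by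
  obtain ⟨hcross, hnonneg⟩ := bdf2_cross_term_nonneg_general (fun z => (hw z).le)
    (by positivity : 0 ≤ 2 * δt / 3) (funext hstep) hu hu' hlam hlam' (funext hcomp) (funext hcomp')
  simp only [discreteInner, Pi.sub_apply] at hcross hnonneg
  exact ⟨by linear_combination 4 * hcross, mul_nonneg zero_le_four hnonneg⟩
end
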